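/- arXiv:math/0002095 — 3 statements merged into one kernel-verified Lean document; each statement's English description precedes it below -/
import Mathlib

section
/- Let N, k, d, f be integers with k ≥ N and d, f ≥ 1, and let g : ℤ → ℚ be a function with g(1+(k−N)d) = 0. Define (π_f g)(n) := Σ_{j=0}^{(k−N)f} g(n−j) − Σ_{j=0}^{(k−N)f} g(1+(k−N)(d+f)−j). Then (π_f g)(2+(k−N)(d+f)) = g(2+(k−N)(d+f)). -/
/-- The operator `π_f`: `(π_f g)(n) := Σ_{j=0}^{(k−N)f} g(n−j) − Σ_{j=0}^{(k−N)f} g(1+(k−N)(d+f)−j)`. -/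
def piOp (N k d f : ℤ) (g : ℤ → ℚ) (n : ℤ) : ℚ :=
  ∑ j ∈ Finset.range (((k - N) * f).toNat + 1), g (n - j) -
    ∑ j ∈ Finset.range (((k - N) * f).toNat + 1), g (1 + (k - N) * (d + f) - j)

/-- Proposition 2 (key identity): if `g(1+(k−N)d) = 0` then
`(π_f g)(2+(k−N)(d+f)) = g(2+(k−N)(d+f))`. -/
theorem stmt3 (N k d f : ℤ) (hkN : N ≤ k) (hd : 1 ≤ d) (hf : 1 ≤ f)
    (g : ℤ → ℚ) (hg : g (1 + (k - N) * d) = 0) :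
    piOp N k d f g (2 + (k - N) * (d + f)) = g (2 + (k - N) * (d + f)) := by
  have hM : ((((k - N) * f).toNat : ℕ) : ℤ) = (k - N) * f :=
    Int.toNat_of_nonneg (mul_nonneg (by linarith) (by linarith))
  unfold piOp
  rw [Finset.sum_range_succ', Finset.sum_range_succ (fun j : ℕ => g (1 + (k - N) * (d + f) - j))]
  have h1 : g (1 + (k - N) * (d + f) - (((k - N) * f).toNat : ℕ)) = 0 := by
    rw [hM, ← hg]
    congr 1
    ring
  have h2 : ∀ j : ℕ, g (2 + (k - N) * (d + f) - ((j + 1 : ℕ) : ℤ))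
      = g (1 + (k - N) * (d + f) - j) := by
    intro j
    congr 1
    push_cast
    ring
  rw [h1, Finset.sum_congr rfl (fun j _ => h2 j)]
  simp
end

section
/- Let N, k, d, f be integers with k ≥ N and d, f ≥ 1, and let g : ℤ → ℚ satisfy the symmetry g(n) = g(N−1+(k−N)d−n) for all n ∈ ℤ. Define (π_f g)(n) := Σ_{j=0}^{(k−N)f} g(n−j) − Σ_{j=0}^{(k−N)f} g(1+(k−N)(d+f)−j). Then (π_f g)(n) = (π_f g)(N−1+(k−N)(d+f)−n) for all n ∈ ℤ. -/
/-- Proposition 2 (symmetry, condition (ii)): if `g(n) = g(N−1+(k−N)d−n)` for all `n`, then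
`(π_f g)(n) = (π_f g)(N−1+(k−N)(d+f)−n)` for all `n`. -/
theorem stmt4 (N k d f : ℤ) (hkN : N ≤ k) (hd : 1 ≤ d) (hf : 1 ≤ f)
    (g : ℤ → ℚ) (hsym : ∀ n : ℤ, g n = g (N - 1 + (k - N) * d - n)) :
    ∀ n : ℤ, piOp N k d f g n = piOp N k d f g (N - 1 + (k - N) * (d + f) - n) := by
  intro n
  unfold piOp
  congr 1
  have hM : 0 ≤ (k - N) * f := mul_nonneg (by linarith) (by linarith)
  rw [← Finset.sum_range_reflect]
  apply Finset.sum_congr rfl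
  intro j hj
  have hj' : j ≤ ((k - N) * f).toNat := by
    have := Finset.mem_range.mp hj
    omega
  have hc : ((((k - N) * f).toNat + 1 - 1 - j : ℕ) : ℤ) = (k - N) * f - j := by
    rw [Nat.add_sub_cancel, Nat.cast_sub hj', Int.toNat_of_nonneg hM]
  rw [hc, hsym]
  congr 1
  ring
end

section
/- Let N, k, d, f be integers with k ≥ N and d, f ≥ 1, and let g : ℤ → ℚ satisfy the symmetry g(n) = g(N−1+(k−N)d−n) for all n ∈ ℤ. Define (π_f g)(n) := Σ_{j=0}^{(k−N)f} g(n−j) − Σ_{j=0}^{(k−N)f} g(1+(k−N)(d+f)−j). Then (π_f g)(1+(k−N)(d+f)) = 0 and (π_f g)(N−2) = 0. -/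
/-- Proposition 2 (flat metric, condition (i)): if `g(n) = g(N−1+(k−N)d−n)` for all `n`, then
`(π_f g)(1+(k−N)(d+f)) = 0` and `(π_f g)(N−2) = 0`. -/
theorem stmt5 (N k d f : ℤ) (hkN : N ≤ k) (hd : 1 ≤ d) (hf : 1 ≤ f)
    (g : ℤ → ℚ) (hsym : ∀ n : ℤ, g n = g (N - 1 + (k - N) * d - n)) :
    piOp N k d f g (1 + (k - N) * (d + f)) = 0 ∧ piOp N k d f g (N - 2) = 0 := by
  refine ⟨by simp [piOp], ?_⟩
  have hM : ((((k - N) * f).toNat : ℕ) : ℤ) = (k - N) * f :=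
    Int.toNat_of_nonneg (mul_nonneg (by linarith) (by linarith))
  unfold piOp
  rw [sub_eq_zero, ← Finset.sum_range_reflect]
  refine Finset.sum_congr rfl fun j hj => ?_
  have hj' : j ≤ ((k - N) * f).toNat := by
    have := Finset.mem_range.mp hj
    omega
  rw [hsym, Nat.add_sub_cancel, Nat.cast_sub hj', hM]
  congr 1
  ring
end
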